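/- Let β ≥ 0 be real and let m ≥ n ≥ 0 and t ≥ s ≥ 0 be integers. Then ∫_ℂ z · Z^{(β)}_{m,n}(z, conj(z)) · conj(Z^{(β)}_{t,s}(z, conj(z))) dν(z) = 0 if t−s ≠ m−n+1, and if t−s = m−n+1 it equals [(−1)^{n+s} (−β−m)_n (−β−t)_s Γ(m−n+β+2)/(n!·s!)] · Σ_{j=0}^{n} Σ_{k=0}^{s} [(β+m−n+2)_{j+k} (−n)_j (−s)_k / ((β+m−n+1)_j (β+m−n+2)_k · j!·k!)]. -/

import Mathlib

open MeasureTheory Finset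

/-- Pochhammer symbol `(a)_j = a (a+1) ⋯ (a+j-1)`. -/
noncomputable def poch (a : ℝ) (j : ℕ) : ℝ := ∏ i ∈ Finset.range j, (a + i)

/-- The generalized 2D Laguerre polynomial `Z^{(β)}_{m,n}(z,w)` (for `m ≥ n`). -/
noncomputable def Zc (β : ℝ) (m n : ℕ) (z w : ℂ) : ℂ :=
  ∑ k ∈ Finset.range (n + 1),
    (((-1 : ℝ) ^ (n - k) * poch (β + 1) m /
        (k.factorial * (n - k).factorial * poch (β + 1) (m - k)) : ℝ) : ℂ) *
      z ^ (m - k) * w ^ (n - k)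

/-!
On the diagonal `w = conj z`, the polynomial factors as
`Z_{d+n,n}(z, conj z) = z^d L_n^{(β+d)}(|z|²)` with a classical Laguerre polynomial, so
`z^p Z_{d+n,n} conj Z_{e+s,s}` is `z^(d+p) (conj z)^e` times a real function of `|z|`. If
`e ≠ d + p`, some rotation changes the sign of this product while it preserves `ν`, and the integral
vanishes. If `e = d + p`, the integrand is a polynomial in `|z|²`, which is integrated term by term
with the moments `∫ |z|^(2i) dν = Γ(β + i + 1)`; pulling the factor `Γ(β + d + p + 1)` out of them
turns the double sum into an Appell function.
-/

open Polynomial ComplexConjugate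

theorem poch_eq_ascPochhammer_eval (a : ℝ) (j : ℕ) : poch a j = (ascPochhammer ℝ j).eval a := by
  induction j with
  | zero => simp [poch]
  | succ j ih => rw [ascPochhammer_succ_eval, ← ih, poch, prod_range_succ, poch]

theorem poch_pos {a : ℝ} (ha : 0 < a) (j : ℕ) : 0 < poch a j :=
  poch_eq_ascPochhammer_eval a j ▸ ascPochhammer_pos j a ha

theorem poch_add (a : ℝ) (i j : ℕ) : poch a (i + j) = poch a i * poch (a + i) j := by
  simp [poch_eq_ascPochhammer_eval, ← ascPochhammer_mul]

theorem poch_neg (a : ℝ) (j : ℕ) : poch (-a) j = (-1) ^ j * poch (a - j + 1) j := by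
  rw [poch_eq_ascPochhammer_eval, poch_eq_ascPochhammer_eval,
    ascPochhammer_eval_neg_eq_descPochhammer, descPochhammer_eval_eq_ascPochhammer]

theorem neg_one_pow_mul_poch_neg_sub (β : ℝ) (d n : ℕ) :
    (-1) ^ n * poch (-β - (d + n : ℕ)) n = poch (β + d + 1) n := by
  rw [← neg_add', poch_neg, ← mul_assoc, ← mul_pow, neg_one_mul, neg_neg, one_pow, one_mul]
  congr 1
  push_cast
  ring

theorem poch_neg_natCast (n j : ℕ) : poch (-n) j = (-1) ^ j * n.descFactorial j := by
  rw [poch_eq_ascPochhammer_eval, ascPochhammer_eval_neg_eq_descPochhammer,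
    descPochhammer_eval_eq_descFactorial]

theorem Gamma_add_natCast_eq_poch_mul {a : ℝ} (ha : 0 < a) (j : ℕ) :
    Real.Gamma (a + j) = poch a j * Real.Gamma a := by
  induction j with
  | zero => simp [poch]
  | succ j ih =>
    have hj : a + j ≠ 0 := by positivity
    rw [Nat.cast_succ, ← add_assoc, Real.Gamma_add_one hj, ih, poch, poch, prod_range_succ]
    ring

/-- The coefficient of `x ^ j` in the Laguerre polynomial `L_n^{(α)}(x)`, read off from
`L_n^{(α)}(x) = (α + 1)_n / n! · ₁F₁(-n; α + 1; x)`. It has a junk value where `(α + 1)_j = 0`. -/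
noncomputable def laguerreCoeff (α : ℝ) (n j : ℕ) : ℝ :=
  poch (α + 1) n / n.factorial * (poch (-n) j / (poch (α + 1) j * j.factorial))

/-- The classical Laguerre polynomial `L_n^{(α)}`, through which the radial part of `Zc` is
expressed. -/
noncomputable def laguerre (α : ℝ) (n : ℕ) : ℝ[X] :=
  ∑ j ∈ range (n + 1), C (laguerreCoeff α n j) * X ^ j

/-- The terminating Appell function `F₂(a; -n, -s; b, c; 1, 1)`. It has a junk value where
`(b)_j = 0` for some `j ≤ n` or `(c)_k = 0` for some `k ≤ s`. -/
noncomputable def appellF2 (a : ℝ) (n s : ℕ) (b c : ℝ) : ℝ :=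
  ∑ j ∈ range (n + 1), ∑ k ∈ range (s + 1),
    poch a (j + k) * poch (-n) j * poch (-s) k /
      (poch b j * poch c k * j.factorial * k.factorial)

/-- The measure `π⁻¹ |z|^{2β} e^{-|z|²} dA(z)` on `ℂ`; it is finite exactly when `-1 < β`. -/
noncomputable def laguerreMeasure (β : ℝ) : Measure ℂ :=
  volume.withDensity fun z =>
    ENNReal.ofReal (Real.pi⁻¹ * ‖z‖ ^ (2 * β) * Real.exp (-(‖z‖ ^ 2)))

theorem laguerre_eval (α : ℝ) (n : ℕ) (x : ℝ) :
    (laguerre α n).eval x = ∑ j ∈ range (n + 1), laguerreCoeff α n j * x ^ j := by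
  simp [laguerre, eval_finsetSum]

theorem Zc_coeff_eq_laguerreCoeff {β : ℝ} (hβ : -1 < β) (d : ℕ) {n j : ℕ} (hj : j ≤ n) :
    (-1) ^ j * poch (β + 1) (d + n) / ((n - j).factorial * j.factorial * poch (β + 1) (d + j)) =
      laguerreCoeff (β + d) n j := by
  have hfact : ((n - j).factorial : ℝ) * n.descFactorial j = n.factorial :=
    mod_cast Nat.factorial_mul_descFactorial hj
  have hd := (poch_pos (by linarith : 0 < β + 1) d).ne'
  have hdj := (poch_pos (by linarith [d.cast_nonneg (α := ℝ)] : 0 < β + 1 + d) j).ne'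
  rw [laguerreCoeff, poch_neg_natCast, poch_add, poch_add, add_right_comm β d 1, ← hfact]
  have hdesc : (n.descFactorial j : ℝ) ≠ 0 :=
    Nat.cast_ne_zero.mpr (Nat.descFactorial_eq_zero_iff_lt.not.mpr hj.not_gt)
  field_simp

theorem Zc_add_eq_pow_mul_aeval_laguerre {β : ℝ} (hβ : -1 < β) (d n : ℕ) (z w : ℂ) :
    Zc β (d + n) n z w = z ^ d * aeval (z * w) (laguerre (β + d) n) := by
  rw [Zc, ← sum_range_reflect, laguerre, map_sum, mul_sum]
  refine sum_congr rfl fun j hj => ?_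
  have hjn : j ≤ n := Nat.lt_succ_iff.mp (mem_range.mp hj)
  rw [show n + 1 - 1 - j = n - j by lia, show n - (n - j) = j by lia,
    show d + n - (n - j) = d + j by lia, Zc_coeff_eq_laguerreCoeff hβ d hjn]
  simp only [map_mul, map_pow, aeval_C, aeval_X, Complex.coe_algebraMap]
  ring

theorem Zc_add_conj {β : ℝ} (hβ : -1 < β) (d n : ℕ) (z : ℂ) :
    Zc β (d + n) n z (conj z) = z ^ d * ((laguerre (β + d) n).eval (‖z‖ ^ 2) : ℝ) := by
  rw [Zc_add_eq_pow_mul_aeval_laguerre hβ, Complex.mul_conj, Complex.normSq_eq_norm_sq,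
    ← Complex.coe_algebraMap, aeval_algebraMap_apply_eq_algebraMap_eval]

theorem pow_mul_Zc_mul_conj_Zc {β : ℝ} (hβ : -1 < β) (p d n e s : ℕ) (z : ℂ) :
    z ^ p * Zc β (d + n) n z (conj z) * conj (Zc β (e + s) s z (conj z)) =
      z ^ (d + p) * conj z ^ e *
        ((laguerre (β + d) n).eval (‖z‖ ^ 2) * (laguerre (β + e) s).eval (‖z‖ ^ 2) : ℝ) := by
  rw [Zc_add_conj hβ, Zc_add_conj hβ, map_mul, map_pow, Complex.conj_ofReal]
  push_cast
  ring

theorem measurePreserving_withDensity_comp {X Y : Type*} [MeasurableSpace X] [MeasurableSpace Y]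
    {μ : Measure X} {ν : Measure Y} {f : X → Y} (hf : MeasurePreserving f μ ν)
    {w : Y → ENNReal} (hw : Measurable w) :
    MeasurePreserving f (μ.withDensity (w ∘ f)) (ν.withDensity w) := by
  refine ⟨hf.measurable, Measure.ext fun s hs => ?_⟩
  rw [Measure.map_apply hf.measurable hs, withDensity_apply _ (hf.measurable hs),
    withDensity_apply _ hs]
  exact hf.setLIntegral_comp_preimage hs hw

theorem measurable_laguerreMeasure_density (β : ℝ) : Measurable fun z : ℂ =>
    ENNReal.ofReal (Real.pi⁻¹ * ‖z‖ ^ (2 * β) * Real.exp (-(‖z‖ ^ 2))) := by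
  fun_prop

theorem measurePreserving_rotation_laguerreMeasure (β : ℝ) (c : Circle) :
    MeasurePreserving (rotation c) (laguerreMeasure β) (laguerreMeasure β) := by
  have h := measurePreserving_withDensity_comp (rotation c).measurePreserving
    (measurable_laguerreMeasure_density β)
  simpa only [laguerreMeasure, Function.comp_def, LinearIsometryEquiv.norm_map] using h

theorem exists_circle_pow_mul_conj_pow_eq_neg_one {a b : ℕ} (hab : a ≠ b) :
    ∃ c : Circle, (c : ℂ) ^ a * conj (c : ℂ) ^ b = -1 := by
  have hab' : (a : ℂ) - b ≠ 0 := sub_ne_zero.mpr (mod_cast hab)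
  refine ⟨Circle.exp (Real.pi / (a - b)), ?_⟩
  rw [Circle.coe_exp, ← Complex.exp_conj, ← Complex.exp_nat_mul, ← Complex.exp_nat_mul,
    ← Complex.exp_add, ← Complex.exp_pi_mul_I]
  congr 1
  rw [map_mul, Complex.conj_ofReal, Complex.conj_I]
  push_cast
  field_simp
  ring

theorem integral_pow_mul_conj_pow_mul_radial_eq_zero {μ : Measure ℂ}
    (hμ : ∀ c : Circle, MeasurePreserving (rotation c) μ μ) {a b : ℕ} (hab : a ≠ b) (g : ℝ → ℂ) :
    ∫ z, z ^ a * conj z ^ b * g ‖z‖ ∂μ = 0 := by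
  obtain ⟨c, hc⟩ := exists_circle_pow_mul_conj_pow_eq_neg_one hab
  refine self_eq_neg.mp ?_
  calc ∫ z, z ^ a * conj z ^ b * g ‖z‖ ∂μ
      = ∫ z, (rotation c z) ^ a * conj (rotation c z) ^ b * g ‖rotation c z‖ ∂μ :=
        ((hμ c).integral_comp (rotation c).toHomeomorph.measurableEmbedding
          fun z => z ^ a * conj z ^ b * g ‖z‖).symm
    _ = ∫ z, -(z ^ a * conj z ^ b * g ‖z‖) ∂μ := by
        congr with z
        rw [LinearIsometryEquiv.norm_map, rotation_apply, map_mul]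
        linear_combination (z ^ a * conj z ^ b * g ‖z‖) * hc
    _ = -∫ z, z ^ a * conj z ^ b * g ‖z‖ ∂μ := integral_neg _

theorem integral_norm_rpow_laguerreMeasure {β q : ℝ} (h : -2 < q + 2 * β) :
    ∫ z, ‖z‖ ^ q ∂laguerreMeasure β = Real.Gamma (β + q / 2 + 1) := by
  rw [laguerreMeasure, integral_withDensity_eq_integral_toReal_smul
    (measurable_laguerreMeasure_density β) (ae_of_all _ fun _ => ENNReal.ofReal_lt_top)]
  calc ∫ z : ℂ, (ENNReal.ofReal (Real.pi⁻¹ * ‖z‖ ^ (2 * β) * Real.exp (-(‖z‖ ^ 2)))).toReal •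
        ‖z‖ ^ q
      = ∫ z : ℂ, Real.pi⁻¹ * (‖z‖ ^ (q + 2 * β) * Real.exp (-‖z‖ ^ (2 : ℝ))) := by
        refine integral_congr_ae ?_
        filter_upwards [Measure.ae_ne volume 0] with z hz
        rw [ENNReal.toReal_ofReal (by positivity), Real.rpow_add (norm_pos_iff.mpr hz),
          Real.rpow_two, smul_eq_mul]
        ring
    _ = Real.Gamma (β + q / 2 + 1) := by
        rw [integral_const_mul, Complex.integral_rpow_mul_exp_neg_rpow one_le_two h,
          show (q + 2 * β + 2) / 2 = β + q / 2 + 1 by ring]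
        field_simp

theorem integral_sq_norm_pow_laguerreMeasure {β : ℝ} {i : ℕ} (h : -1 < β + i) :
    ∫ z, (‖z‖ ^ 2) ^ i ∂laguerreMeasure β = Real.Gamma (β + i + 1) := by
  have hmoment := integral_norm_rpow_laguerreMeasure (β := β) (q := (2 * i : ℕ))
    (by push_cast; linarith)
  simp only [Real.rpow_natCast, pow_mul] at hmoment
  rw [hmoment]
  push_cast
  congr 1
  ring

theorem integrable_sq_norm_pow_laguerreMeasure {β : ℝ} {i : ℕ} (h : -1 < β + i) :
    Integrable (fun z => (‖z‖ ^ 2) ^ i) (laguerreMeasure β) := by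
  refine not_imp_comm.mp integral_undef ?_
  rw [integral_sq_norm_pow_laguerreMeasure h]
  exact (Real.Gamma_pos_of_pos (by linarith)).ne'

theorem laguerreCoeff_mul_laguerreCoeff_mul_Gamma {a : ℝ} (ha : 0 < a) (α γ : ℝ) (n s j k : ℕ) :
    laguerreCoeff α n j * laguerreCoeff γ s k * Real.Gamma (a + (j + k : ℕ)) =
      poch (α + 1) n * poch (γ + 1) s * Real.Gamma a / (n.factorial * s.factorial) *
        (poch a (j + k) * poch (-n) j * poch (-s) k /
          (poch (α + 1) j * poch (γ + 1) k * j.factorial * k.factorial)) := by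
  rw [Gamma_add_natCast_eq_poch_mul ha, laguerreCoeff, laguerreCoeff]
  ring

theorem integral_sq_norm_pow_mul_laguerre_mul_laguerre {β : ℝ} {i : ℕ} (h : -1 < β + i)
    (α γ : ℝ) (n s : ℕ) :
    ∫ z, (‖z‖ ^ 2) ^ i * ((laguerre α n).eval (‖z‖ ^ 2) * (laguerre γ s).eval (‖z‖ ^ 2))
        ∂laguerreMeasure β =
      poch (α + 1) n * poch (γ + 1) s * Real.Gamma (β + i + 1) / (n.factorial * s.factorial) *
        appellF2 (β + i + 1) n s (α + 1) (γ + 1) := by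
  have hshift (j k : ℕ) : -1 < β + (i + (j + k) : ℕ) := by
    push_cast
    linarith [j.cast_nonneg (α := ℝ), k.cast_nonneg (α := ℝ)]
  have hint (j k : ℕ) : Integrable (fun z => laguerreCoeff α n j * laguerreCoeff γ s k *
      (‖z‖ ^ 2) ^ (i + (j + k))) (laguerreMeasure β) :=
    (integrable_sq_norm_pow_laguerreMeasure (hshift j k)).const_mul _
  calc ∫ z, (‖z‖ ^ 2) ^ i * ((laguerre α n).eval (‖z‖ ^ 2) * (laguerre γ s).eval (‖z‖ ^ 2))
        ∂laguerreMeasure β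
      = ∫ z, ∑ j ∈ range (n + 1), ∑ k ∈ range (s + 1),
          laguerreCoeff α n j * laguerreCoeff γ s k * (‖z‖ ^ 2) ^ (i + (j + k))
          ∂laguerreMeasure β := by
        congr with z
        rw [laguerre_eval, laguerre_eval, sum_mul_sum, mul_sum]
        refine sum_congr rfl fun j _ => ?_
        rw [mul_sum]
        refine sum_congr rfl fun k _ => ?_
        ring
    _ = ∑ j ∈ range (n + 1), ∑ k ∈ range (s + 1),
          laguerreCoeff α n j * laguerreCoeff γ s k * Real.Gamma (β + i + 1 + (j + k : ℕ)) := by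
        rw [integral_finsetSum _ fun j _ => integrable_finsetSum _ fun k _ => hint j k]
        refine sum_congr rfl fun j _ => ?_
        rw [integral_finsetSum _ fun k _ => hint j k]
        refine sum_congr rfl fun k _ => ?_
        rw [integral_const_mul, integral_sq_norm_pow_laguerreMeasure (hshift j k),
          Nat.cast_add i, ← add_assoc, add_right_comm]
    _ = _ := by
        simp only [laguerreCoeff_mul_laguerreCoeff_mul_Gamma (by linarith : 0 < β + i + 1),
          ← mul_sum, appellF2]

theorem integral_pow_mul_Zc_mul_conj_Zc_of_ne {β : ℝ} (hβ : -1 < β) {p d e : ℕ} (hde : e ≠ d + p)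
    (n s : ℕ) :
    ∫ z, z ^ p * Zc β (d + n) n z (conj z) * conj (Zc β (e + s) s z (conj z))
      ∂laguerreMeasure β = 0 := by
  simp only [pow_mul_Zc_mul_conj_Zc hβ]
  exact integral_pow_mul_conj_pow_mul_radial_eq_zero
    (measurePreserving_rotation_laguerreMeasure β) hde.symm
    fun r => ((laguerre (β + d) n).eval (r ^ 2) * (laguerre (β + e) s).eval (r ^ 2) : ℝ)

theorem integral_pow_mul_Zc_mul_conj_Zc {β : ℝ} (hβ : -1 < β) (p d n s : ℕ) :
    ∫ z, z ^ p * Zc β (d + n) n z (conj z) * conj (Zc β (d + p + s) s z (conj z))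
        ∂laguerreMeasure β =
      (poch (β + d + 1) n * poch (β + (d + p : ℕ) + 1) s * Real.Gamma (β + (d + p : ℕ) + 1) /
        (n.factorial * s.factorial) *
          appellF2 (β + (d + p : ℕ) + 1) n s (β + d + 1) (β + (d + p : ℕ) + 1) : ℝ) := by
  have hdp : -1 < β + (d + p : ℕ) := by linarith [(d + p).cast_nonneg (α := ℝ)]
  rw [← integral_sq_norm_pow_mul_laguerre_mul_laguerre hdp, ← integral_complex_ofReal]
  congr with z
  rw [pow_mul_Zc_mul_conj_Zc hβ, ← mul_pow, Complex.mul_conj, Complex.normSq_eq_norm_sq]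
  push_cast
  rfl

theorem laguerre2D_integral_z_general {β : ℝ} (hβ : -1 < β) {m n t s : ℕ} (hmn : n ≤ m)
    (hts : s ≤ t) (p : ℕ) :
    ((t : ℤ) - s ≠ (m : ℤ) - n + p →
      ∫ z, z ^ p * Zc β m n z (conj z) * conj (Zc β t s z (conj z)) ∂laguerreMeasure β = 0) ∧
    ((t : ℤ) - s = (m : ℤ) - n + p →
      ∫ z, z ^ p * Zc β m n z (conj z) * conj (Zc β t s z (conj z)) ∂laguerreMeasure β =
        ((-1) ^ (n + s) * poch (-β - m) n * poch (-β - t) s *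
            Real.Gamma ((m : ℝ) - n + β + p + 1) / (n.factorial * s.factorial) *
          appellF2 (β + m - n + p + 1) n s (β + m - n + 1) (β + m - n + p + 1) : ℝ)) := by
  obtain ⟨d, rfl⟩ := Nat.exists_eq_add_of_le' hmn
  obtain ⟨e, rfl⟩ := Nat.exists_eq_add_of_le' hts
  refine ⟨fun h => integral_pow_mul_Zc_mul_conj_Zc_of_ne hβ (by lia) n s, fun h => ?_⟩
  obtain rfl : e = d + p := by lia
  rw [integral_pow_mul_Zc_mul_conj_Zc hβ, ← neg_one_pow_mul_poch_neg_sub,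
    ← neg_one_pow_mul_poch_neg_sub]
  push_cast
  ring_nf

/-- Integral formula for `∫ z Z^{(β)}_{m,n}(z,z̄) conj(Z^{(β)}_{t,s}(z,z̄)) dν(z)`,
with `dν(z) = π⁻¹ |z|^{2β} e^{−|z|²} dA(z)`. -/
theorem laguerre2D_integral_z (β : ℝ) (hβ : 0 ≤ β) (m n t s : ℕ)
    (hmn : n ≤ m) (hts : s ≤ t)
    (ν : Measure ℂ)
    (hν : ν = volume.withDensity (fun z =>
      ENNReal.ofReal (Real.pi⁻¹ * ‖z‖ ^ (2 * β) * Real.exp (-(‖z‖ ^ 2))))) :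
    (((t : ℤ) - s ≠ (m : ℤ) - n + 1) →
      ∫ z : ℂ, z * Zc β m n z (starRingEnd ℂ z) *
          starRingEnd ℂ (Zc β t s z (starRingEnd ℂ z)) ∂ν = 0) ∧
    (((t : ℤ) - s = (m : ℤ) - n + 1) →
      ∫ z : ℂ, z * Zc β m n z (starRingEnd ℂ z) *
          starRingEnd ℂ (Zc β t s z (starRingEnd ℂ z)) ∂ν
        = ((((-1 : ℝ) ^ (n + s) * poch (-β - m) n * poch (-β - t) s *
              Real.Gamma ((m : ℝ) - n + β + 2) / (n.factorial * s.factorial)) *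
            ∑ j ∈ Finset.range (n + 1), ∑ k ∈ Finset.range (s + 1),
              poch (β + (m : ℝ) - n + 2) (j + k) * poch (-(n : ℝ)) j * poch (-(s : ℝ)) k /
                (poch (β + (m : ℝ) - n + 1) j * poch (β + (m : ℝ) - n + 2) k *
                  j.factorial * k.factorial) : ℝ) : ℂ)) := by
  subst hν
  simpa only [laguerreMeasure, appellF2, pow_one, Nat.cast_one, add_assoc, one_add_one_eq_two] using
    laguerre2D_integral_z_general (by linarith : -1 < β) hmn hts 1
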